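/- arXiv:1208.5278 — 3 statements merged into one kernel-verified Lean document; each statement's English description precedes it below -/
import Mathlib

section
/- Let q ∈ ℂ with q ≠ 0 and q² ≠ 1, set [n]_q := (qⁿ − q⁻ⁿ)/(q − q⁻¹) and ⟨n⟩_q := qⁿ + q⁻ⁿ for n ∈ ℤ. Then for all m, n, l ∈ ℤ: ⟨l⟩_q·[m−n]_q·[l−m−n]_q + ⟨m⟩_q·[n−l]_q·[m−n−l]_q + ⟨n⟩_q·[l−m]_q·[n−l−m]_q = 0. (This is the structure-constant form of the q-deformed Jacobi identity (q^l+q^{−l})[[L_m,L_n]_q,L_l]_q + cyclic permutations = 0.) -/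
/-- The q-number `[n]_q = (q^n - q^(-n))/(q - q⁻¹)`. -/
noncomputable def qnum (q : ℂ) (n : ℤ) : ℂ := (q ^ n - q ^ (-n)) / (q - q⁻¹)

/-- `⟨n⟩_q = q^n + q^(-n)`. -/
noncomputable def qang (q : ℂ) (n : ℤ) : ℂ := q ^ n + q ^ (-n)

/-! With `s a = χ a - χ (-a)` and `c a = χ a + χ (-a)` for the character `χ n = q ^ n`, we have
`[n]_q = s n / (q - q⁻¹)` and `⟨n⟩_q = c n`. The product-to-sum formulas of `2 sinh` and `2 cosh`
hold for any character, and they turn each of the three products into a combination of values of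
`c` at `2 • (l - n)`, `2 • (m - l)`, `2 • m` and `2 • n`; the cyclic sum of these telescopes. -/

section Character

variable {A R : Type*} [AddGroup A] [CommRing R]

/-- The analogue of `2 cosh` for an additive character `χ`, which gives `⟨n⟩_q` when `χ n = q ^ n`.
The factor `2` is kept so that no division is needed in `R`. -/
def twoCosh (χ : AddChar A R) (a : A) : R := χ a + χ (-a)

/-- The analogue of `2 sinh` for an additive character `χ`, which gives the numerator of `[n]_q`
when `χ n = q ^ n`. -/
def twoSinh (χ : AddChar A R) (a : A) : R := χ a - χ (-a)

theorem twoCosh_mul_twoSinh (χ : AddChar A R) (a b : A) :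
    twoCosh χ a * twoSinh χ b = twoSinh χ (a + b) - twoSinh χ (a - b) := by
  simp only [twoCosh, twoSinh, sub_eq_add_neg a, neg_add_rev, neg_neg, AddChar.map_add_eq_mul]
  ring

theorem twoSinh_mul_twoSinh (χ : AddChar A R) (a b : A) :
    twoSinh χ a * twoSinh χ b = twoCosh χ (a + b) - twoCosh χ (a - b) := by
  simp only [twoCosh, twoSinh, sub_eq_add_neg a, neg_add_rev, neg_neg, AddChar.map_add_eq_mul]
  ring

end Character

section Jacobi

variable {A R : Type*} [AddCommGroup A] [CommRing R]

theorem twoCosh_mul_twoSinh_sub_mul_twoSinh_sub_sub (χ : AddChar A R) (m n l : A) :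
    twoCosh χ l * twoSinh χ (m - n) * twoSinh χ (l - m - n) =
      (twoCosh χ (2 • (l - n)) - twoCosh χ (2 • (m - l))) -
        (twoCosh χ (2 • m) - twoCosh χ (2 • n)) := by
  have cosh_mul_sinh : twoCosh χ l * twoSinh χ (l - m - n) =
      twoSinh χ (l + (l - m - n)) - twoSinh χ (m + n) := by
    rw [twoCosh_mul_twoSinh, show l - (l - m - n) = m + n by abel]
  have sinh_mul_sinh_left : twoSinh χ (m - n) * twoSinh χ (l + (l - m - n)) =
      twoCosh χ (2 • (l - n)) - twoCosh χ (2 • (m - l)) := by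
    rw [twoSinh_mul_twoSinh, show m - n + (l + (l - m - n)) = 2 • (l - n) by abel,
      show m - n - (l + (l - m - n)) = 2 • (m - l) by abel]
  have sinh_mul_sinh_right : twoSinh χ (m + n) * twoSinh χ (m - n) =
      twoCosh χ (2 • m) - twoCosh χ (2 • n) := by
    rw [twoSinh_mul_twoSinh, show m + n + (m - n) = 2 • m by abel,
      show m + n - (m - n) = 2 • n by abel]
  linear_combination twoSinh χ (m - n) * cosh_mul_sinh + sinh_mul_sinh_left - sinh_mul_sinh_right

theorem q_deformed_jacobi_structure_constants_general (χ : AddChar A R) (m n l : A) :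
    twoCosh χ l * twoSinh χ (m - n) * twoSinh χ (l - m - n)
      + twoCosh χ m * twoSinh χ (n - l) * twoSinh χ (m - n - l)
      + twoCosh χ n * twoSinh χ (l - m) * twoSinh χ (n - l - m) = 0 := by
  simp only [twoCosh_mul_twoSinh_sub_mul_twoSinh_sub_sub]
  ring

end Jacobi

/-- The character `n ↦ q ^ n` of `ℤ` attached to a nonzero `q`. -/
def zpowAddChar {G₀ : Type*} [GroupWithZero G₀] (q : G₀) (hq : q ≠ 0) : AddChar ℤ G₀ where
  toFun n := q ^ n
  map_zero_eq_one' := zpow_zero q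
  map_add_eq_mul' := zpow_add₀ hq

theorem qang_eq_twoCosh (q : ℂ) (hq : q ≠ 0) (n : ℤ) :
    qang q n = twoCosh (zpowAddChar q hq) n := rfl

theorem qnum_eq_twoSinh_div (q : ℂ) (hq : q ≠ 0) (n : ℤ) :
    qnum q n = twoSinh (zpowAddChar q hq) n / (q - q⁻¹) := rfl

/-- The structure-constant form of the q-deformed Jacobi identity:
`⟨l⟩[m−n][l−m−n] + ⟨m⟩[n−l][m−n−l] + ⟨n⟩[l−m][n−l−m] = 0`. -/
theorem q_deformed_jacobi_structure_constants (q : ℂ) (hq0 : q ≠ 0)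
    (hq2 : q ^ (2 : ℕ) ≠ 1) (m n l : ℤ) :
    qang q l * qnum q (m - n) * qnum q (l - m - n)
      + qang q m * qnum q (n - l) * qnum q (m - n - l)
      + qang q n * qnum q (l - m) * qnum q (n - l - m) = 0 := by
  simp only [qang_eq_twoCosh q hq0, qnum_eq_twoSinh_div q hq0]
  linear_combination (q - q⁻¹)⁻¹ ^ 2 *
    q_deformed_jacobi_structure_constants_general (zpowAddChar q hq0) m n l
end

section
/- Let G be an additive abelian group, L a ℂ-vector space with an internal direct sum decomposition L = ⊕_{g∈G} L_g, [·,·] a bilinear skew-symmetric bracket on L with [L_g, L_h] ⊆ L_{g+h} and satisfying the Hom-Jacobi identity with respect to a linear map α: L → L with α(L_g) ⊆ L_g. Let V = ⊕_{g∈G} V_g be a ℂ-vector space with a linear action ρ: L → End(V), a linear map β_V: V → V, such that ρ([x,y]) ∘ β_V = ρ(α(x)) ∘ ρ(y) − ρ(α(y)) ∘ ρ(x), ρ(L_g)(V_h) ⊆ V_{g+h}, and β_V(V_g) ⊆ V_g. Let D: L → V be a derivation, i.e. a linear map with D ∘ α = β_V ∘ D and D([x,y]) = ρ(x)(D(y))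 − ρ(y)(D(x)) for all x,y ∈ L. Then there exists a family (D_g)_{g∈G} of linear maps L → V such that: each D_g satisfies D_g ∘ α = β_V ∘ D_g and D_g([x,y]) = ρ(x)(D_g(y)) − ρ(y)(D_g(x)), each D_g is homogeneous of degree g (D_g(L_h) ⊆ V_{g+h} for all h ∈ G), and for every u ∈ L the set {g ∈ G : D_g(u) ≠ 0} is finite with D(u) = Σ_{g∈G} D_g(u). -/
/-!
Projecting `D x` to degree `g + h` for `x` homogeneous of degree `h`, and extending linearly,
defines the component `D_g`. Taking the degree `g + h` part of `D (α x) = βV (D x)`, and the degree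
`g + (h + k)` part of the Leibniz rule at homogeneous `x`, `y` of degrees `h`, `k`, gives the same
identities for `D_g`, because `βV` and `ρ x` shift degrees injectively and so commute with the
projections. For fixed homogeneous `x` of degree `h`, the translation `g ↦ g + h` is a bijection
of `G`, so the vectors `D_g x` are exactly the homogeneous parts of `D x`, each occurring once.
-/

open DirectSum Function

section Decompose

variable {ι κ M N S T : Type*} [DecidableEq ι] [DecidableEq κ]
  [AddCommMonoid M] [SetLike S M] [AddSubmonoidClass S M] (ℳ : ι → S) [Decomposition ℳ]
  [AddCommMonoid N] [SetLike T N] [AddSubmonoidClass T N] (𝒩 : κ → T) [Decomposition 𝒩]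

theorem decompose_map_apply_of_injective {F : Type*} [FunLike F M N] [AddMonoidHomClass F M N]
    {f : F} {s : ι → κ} (hs : Injective s) (hf : ∀ i, ∀ x ∈ ℳ i, f x ∈ 𝒩 (s i)) (x : M) (i : ι) :
    (decompose 𝒩 (f x) (s i) : N) = f (decompose ℳ x i) := by
  induction x using Decomposition.inductionOn ℳ with
  | zero => simp
  | @homogeneous j x =>
    obtain rfl | hij := eq_or_ne j i
    · rw [decompose_of_mem_same 𝒩 (hf j x x.2), decompose_of_mem_same ℳ x.2]
    · rw [decompose_of_mem_ne 𝒩 (hf j x x.2) (hs.ne hij), decompose_of_mem_ne ℳ x.2 hij, map_zero]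
  | add x y hx hy => simp [hx, hy]

theorem finite_support_decompose (x : M) : (support fun i => (decompose ℳ x i : M)).Finite :=
  (DFinsupp.finite_support (decompose ℳ x)).subset fun _ hi hzero => hi (by simp [hzero])

theorem finsum_decompose (x : M) : ∑ᶠ i, (decompose ℳ x i : M) = x := by
  classical
  rw [finsum_eq_sum_of_support_subset (s := (decompose ℳ x).support), sum_support_decompose]
  intro i hi
  simpa using hi

end Decompose

theorem bilinear_ext_of_homogeneous
    {ι κ R M N P : Type*} [DecidableEq ι] [DecidableEq κ] [CommSemiring R]
    [AddCommMonoid M] [Module R M] [AddCommMonoid N] [Module R N] [AddCommMonoid P] [Module R P]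
    (ℳ : ι → Submodule R M) [Decomposition ℳ] (𝒩 : κ → Submodule R N) [Decomposition 𝒩]
    {f g : M →ₗ[R] N →ₗ[R] P} (h : ∀ i, ∀ x ∈ ℳ i, ∀ j, ∀ y ∈ 𝒩 j, f x y = g x y) : f = g :=
  decompose_lhom_ext ℳ fun i => LinearMap.ext fun x =>
    decompose_lhom_ext 𝒩 fun j => LinearMap.ext fun y => h i x x.2 j y y.2

section HomogeneousComponent

variable {G R M N : Type*} [DecidableEq G] [Semiring R]
  [AddCommMonoid M] [Module R M] [AddCommMonoid N] [Module R N]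
  (ℳ : G → Submodule R M) [Decomposition ℳ] (𝒩 : G → Submodule R N) [Decomposition 𝒩]

/-- The homogeneous component of degree `g` of a linear map `f` between `G`-graded modules, sending
`x` of degree `h` to the part of `f x` of degree `g + h`. -/
noncomputable def homogeneousComponent [Add G] (f : M →ₗ[R] N) (g : G) : M →ₗ[R] N :=
  toModule R G N (fun h => (𝒩 (g + h)).subtype ∘ₗ component R G (fun i => 𝒩 i) (g + h) ∘ₗ
    (decomposeLinearEquiv 𝒩).toLinearMap ∘ₗ f ∘ₗ (ℳ h).subtype) ∘ₗ
    (decomposeLinearEquiv ℳ).toLinearMap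

variable {ℳ} in
theorem homogeneousComponent_apply_of_mem [Add G] (f : M →ₗ[R] N) (g : G) {h : G} {x : M}
    (hx : x ∈ ℳ h) : homogeneousComponent ℳ 𝒩 f g x = decompose 𝒩 (f x) (g + h) := by
  simp only [homogeneousComponent, LinearMap.comp_apply, LinearEquiv.coe_coe,
    decomposeLinearEquiv_apply, decompose_of_mem ℳ hx, ← lof_eq_of R, toModule_lof]
  rfl

variable {ℳ} in
theorem homogeneousComponent_apply_mem [Add G] (f : M →ₗ[R] N) (g : G) {h : G} {x : M}
    (hx : x ∈ ℳ h) : homogeneousComponent ℳ 𝒩 f g x ∈ 𝒩 (g + h) := by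
  rw [homogeneousComponent_apply_of_mem 𝒩 f g hx]
  exact SetLike.coe_mem _

section Comp

variable {P : Type*} [AddCommMonoid P] [Module R P] (𝒬 : G → Submodule R P) [Decomposition 𝒬]

theorem homogeneousComponent_comp_left [Add G] {b : N →ₗ[R] P}
    (hb : ∀ i, ∀ y ∈ 𝒩 i, b y ∈ 𝒬 i) (f : M →ₗ[R] N) (g : G) :
    homogeneousComponent ℳ 𝒬 (b ∘ₗ f) g = b ∘ₗ homogeneousComponent ℳ 𝒩 f g := by
  refine decompose_lhom_ext ℳ fun h => LinearMap.ext fun x => ?_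
  simp only [LinearMap.comp_apply, Submodule.subtype_apply,
    homogeneousComponent_apply_of_mem _ _ _ x.2]
  exact decompose_map_apply_of_injective 𝒩 𝒬 injective_id hb (f x) (g + h)

theorem homogeneousComponent_comp_right [Add G] {a : M →ₗ[R] N}
    (ha : ∀ i, ∀ x ∈ ℳ i, a x ∈ 𝒩 i) (f : N →ₗ[R] P) (g : G) :
    homogeneousComponent ℳ 𝒬 (f ∘ₗ a) g = homogeneousComponent 𝒩 𝒬 f g ∘ₗ a := by
  refine decompose_lhom_ext ℳ fun h => LinearMap.ext fun x => ?_
  simp only [LinearMap.comp_apply, Submodule.subtype_apply,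
    homogeneousComponent_apply_of_mem _ _ _ x.2,
    homogeneousComponent_apply_of_mem _ _ _ (ha h x x.2)]

end Comp

theorem finite_support_homogeneousComponent [Add G] [IsRightCancelAdd G] (f : M →ₗ[R] N) (x : M) :
    (support fun g => homogeneousComponent ℳ 𝒩 f g x).Finite := by
  induction x using Decomposition.inductionOn ℳ with
  | zero => simp
  | @homogeneous h x =>
    simp only [homogeneousComponent_apply_of_mem 𝒩 f _ x.2]
    exact (finite_support_decompose 𝒩 (f x)).preimage (add_left_injective h).injOn
  | add x y hx hy =>
    simp only [map_add]
    exact (hx.union hy).subset (support_add _ _)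

theorem finsum_homogeneousComponent [AddGroup G] (f : M →ₗ[R] N) (x : M) :
    ∑ᶠ g, homogeneousComponent ℳ 𝒩 f g x = f x := by
  induction x using Decomposition.inductionOn ℳ with
  | zero => simp
  | @homogeneous h x =>
    calc ∑ᶠ g, homogeneousComponent ℳ 𝒩 f g x
        = ∑ᶠ g, (decompose 𝒩 (f x) (g + h) : N) := by
          simp only [homogeneousComponent_apply_of_mem 𝒩 f _ x.2]
      _ = ∑ᶠ g, (decompose 𝒩 (f x) g : N) :=
          finsum_comp_equiv (Equiv.addRight h) (f := fun g => (decompose 𝒩 (f x) g : N))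
      _ = f x := finsum_decompose 𝒩 (f x)
  | add x y hx hy =>
    simp only [map_add]
    rw [finsum_add_distrib (finite_support_homogeneousComponent ℳ 𝒩 f x)
      (finite_support_homogeneousComponent ℳ 𝒩 f y), hx, hy]

end HomogeneousComponent

section Derivation

variable {G R L V : Type*} [DecidableEq G] [CommRing R]
  [AddCommGroup L] [Module R L] [AddCommGroup V] [Module R V]
  {ℒ : G → Submodule R L} {𝒱 : G → Submodule R V}
  {br : L →ₗ[R] L →ₗ[R] L} {ρ : L →ₗ[R] V →ₗ[R] V} {D : L →ₗ[R] V}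

theorem homogeneousComponent_leibniz [AddCommSemigroup G] [IsLeftCancelAdd G]
    [Decomposition ℒ] [Decomposition 𝒱]
    (hbr : ∀ g h, ∀ x ∈ ℒ g, ∀ y ∈ ℒ h, br x y ∈ ℒ (g + h))
    (hρ : ∀ g h, ∀ x ∈ ℒ g, ∀ v ∈ 𝒱 h, ρ x v ∈ 𝒱 (g + h))
    (hD : ∀ x y, D (br x y) = ρ x (D y) - ρ y (D x)) (g : G) (x y : L) :
    homogeneousComponent ℒ 𝒱 D g (br x y) =
      ρ x (homogeneousComponent ℒ 𝒱 D g y) - ρ y (homogeneousComponent ℒ 𝒱 D g x) := by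
  set Dg := homogeneousComponent ℒ 𝒱 D g
  have decompose_action {h : G} {x : L} (hx : x ∈ ℒ h) (v : V) (i : G) :
      (decompose 𝒱 (ρ x v) (h + i) : V) = ρ x (decompose 𝒱 v i) :=
    decompose_map_apply_of_injective 𝒱 𝒱 (add_right_injective h) (fun i => hρ h i x hx) v i
  suffices br.compr₂ Dg = ρ.compl₂ Dg - (ρ.compl₂ Dg).flip from LinearMap.congr_fun₂ this x y
  refine bilinear_ext_of_homogeneous ℒ ℒ fun h x hx k y hy => ?_
  calc Dg (br x y)
      = decompose 𝒱 (ρ x (D y) - ρ y (D x)) (g + (h + k)) := by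
        rw [← hD]
        exact homogeneousComponent_apply_of_mem 𝒱 D g (hbr h k x hx y hy)
    _ = decompose 𝒱 (ρ x (D y)) (h + (g + k)) - decompose 𝒱 (ρ y (D x)) (k + (g + h)) := by
        rw [decompose_sub, DirectSum.sub_apply, AddSubgroupClass.coe_sub, add_left_comm h,
          add_left_comm k, add_comm k]
    _ = ρ x (Dg y) - ρ y (Dg x) := by
        rw [decompose_action hx, decompose_action hy,
          ← homogeneousComponent_apply_of_mem 𝒱 D g hy,
          ← homogeneousComponent_apply_of_mem 𝒱 D g hx]

theorem graded_derivation_decomposition_general [AddCommGroup G]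
    (hLint : IsInternal ℒ) (hVint : IsInternal 𝒱) {α : L →ₗ[R] L} {βV : V →ₗ[R] V}
    (hbrgr : ∀ g h, ∀ x ∈ ℒ g, ∀ y ∈ ℒ h, br x y ∈ ℒ (g + h))
    (hαgr : ∀ g, ∀ x ∈ ℒ g, α x ∈ ℒ g)
    (hρgr : ∀ g h, ∀ x ∈ ℒ g, ∀ v ∈ 𝒱 h, ρ x v ∈ 𝒱 (g + h))
    (hβgr : ∀ g, ∀ v ∈ 𝒱 g, βV v ∈ 𝒱 g)
    (hDα : ∀ x, D (α x) = βV (D x))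
    (hDder : ∀ x y, D (br x y) = ρ x (D y) - ρ y (D x)) :
    ∃ Dg : G → (L →ₗ[R] V),
      (∀ g,
        (∀ x, Dg g (α x) = βV (Dg g x)) ∧
        (∀ x y, Dg g (br x y) = ρ x (Dg g y) - ρ y (Dg g x)) ∧
        (∀ h, ∀ x ∈ ℒ h, Dg g x ∈ 𝒱 (g + h))) ∧
      (∀ u, (support fun g => Dg g u).Finite ∧ D u = ∑ᶠ g, Dg g u) := by
  let := hLint.chooseDecomposition
  let := hVint.chooseDecomposition
  have map_twist (g : G) : homogeneousComponent ℒ 𝒱 D g ∘ₗ α =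
      βV ∘ₗ homogeneousComponent ℒ 𝒱 D g := by
    have hcomp : D ∘ₗ α = βV ∘ₗ D := LinearMap.ext hDα
    rw [← homogeneousComponent_comp_right ℒ ℒ 𝒱 hαgr,
      ← homogeneousComponent_comp_left ℒ 𝒱 𝒱 hβgr, hcomp]
  exact ⟨homogeneousComponent ℒ 𝒱 D,
    fun g => ⟨LinearMap.congr_fun (map_twist g), homogeneousComponent_leibniz hbrgr hρgr hDder g,
      fun _ _ hx => homogeneousComponent_apply_mem 𝒱 D g hx⟩,
    fun u => ⟨finite_support_homogeneousComponent ℒ 𝒱 D u,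
      (finsum_homogeneousComponent ℒ 𝒱 D u).symm⟩⟩

end Derivation

/-- Every derivation of a `G`-graded Hom-Lie algebra `L` with values in a
`G`-graded Hom-`L`-module `V` decomposes into homogeneous components: there is
a family `(D_g)_{g ∈ G}` of derivations, `D_g` homogeneous of degree `g`, with
`D(u) = Σ_g D_g(u)` (finitely many nonzero terms) for every `u ∈ L`. -/
theorem graded_derivation_decomposition
    {G : Type*} [AddCommGroup G] [DecidableEq G] {L V : Type*}
    [AddCommGroup L] [Module ℂ L] [AddCommGroup V] [Module ℂ V]
    (ℒ : G → Submodule ℂ L) (𝒱 : G → Submodule ℂ V)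
    (hLint : DirectSum.IsInternal ℒ) (hVint : DirectSum.IsInternal 𝒱)
    (br : L →ₗ[ℂ] L →ₗ[ℂ] L) (α : L →ₗ[ℂ] L)
    (hskew : ∀ x y : L, br x y = - br y x)
    (hjac : ∀ x y z : L,
      br (br x y) (α z) + br (br y z) (α x) + br (br z x) (α y) = 0)
    (hbrgr : ∀ g h : G, ∀ x ∈ ℒ g, ∀ y ∈ ℒ h, br x y ∈ ℒ (g + h))
    (hαgr : ∀ g : G, ∀ x ∈ ℒ g, α x ∈ ℒ g)
    (ρ : L →ₗ[ℂ] V →ₗ[ℂ] V) (βV : V →ₗ[ℂ] V)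
    (hrep : ∀ (x y : L) (v : V),
      ρ (br x y) (βV v) = ρ (α x) (ρ y v) - ρ (α y) (ρ x v))
    (hρgr : ∀ g h : G, ∀ x ∈ ℒ g, ∀ v ∈ 𝒱 h, ρ x v ∈ 𝒱 (g + h))
    (hβgr : ∀ g : G, ∀ v ∈ 𝒱 g, βV v ∈ 𝒱 g)
    (D : L →ₗ[ℂ] V)
    (hDα : ∀ x : L, D (α x) = βV (D x))
    (hDder : ∀ x y : L, D (br x y) = ρ x (D y) - ρ y (D x)) :
    ∃ Dg : G → (L →ₗ[ℂ] V),
      (∀ g : G,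
        (∀ x : L, Dg g (α x) = βV (Dg g x)) ∧
        (∀ x y : L, Dg g (br x y) = ρ x (Dg g y) - ρ y (Dg g x)) ∧
        (∀ h : G, ∀ x ∈ ℒ h, Dg g x ∈ 𝒱 (g + h))) ∧
      (∀ u : L,
        (Function.support fun g => Dg g u).Finite ∧ D u = ∑ᶠ g : G, Dg g u) := by
  exact graded_derivation_decomposition_general hLint hVint hbrgr hαgr hρgr hβgr hDα hDder
end

section
/- Oscillator realization of the centerless W(2,2) algebra: let A be a unital associative ℂ-algebra and let a, a⁺, b, b⁺ ∈ A satisfy a·a⁺ − a⁺·a = 1, with a⁺ invertible, b·b⁺ + b⁺·b = 1, b² = (b⁺)² = 0, and suppose a and a⁺ each commute with b and with b⁺. For n ∈ ℤ define L_n := (a⁺)^{n+1}·a and M_n := (a⁺)^{n+1}·b⁺·a, where (a⁺)^{n+1} denotes the integer power of the unit a⁺. Then, with [A,B] := A·B − B·A, for all m, n ∈ ℤ: [L_m, L_n] = (n−m)·L_{m+n}, [L_m, M_n] = (n−m)·M_{m+n}, and [M_m, M_n] = 0. -/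
/-!
The commutator with `a` is a derivation and `⁅a, u⁆ = 1`, so it acts on Laurent polynomials in `u`
as `d/du`. Hence `u ^ (n + 1) * a` behaves like the vector field `u ^ (n + 1) d/du`, and these
satisfy the Witt relations. Since `bp` commutes with `a` and `u`, the second family is the first
one multiplied by `bp`: one factor `bp` passes through the bracket, and two give `bp * bp = 0`.
-/

section Commutator

variable {A : Type*} [Ring A] {a c x y : A} {u : Aˣ}

theorem lie_mul (a x y : A) : ⁅a, x * y⁆ = ⁅a, x⁆ * y + x * ⁅a, y⁆ := by
  simp only [Ring.lie_def]
  noncomm_ring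

theorem lie_mul_of_commute (h : Commute x c) (y : A) : ⁅x, y * c⁆ = ⁅x, y⁆ * c := by
  rw [lie_mul, commute_iff_lie_eq.mp h, mul_zero, add_zero]

theorem lie_units_inv (a : A) (u : Aˣ) :
    ⁅a, (↑u⁻¹ : A)⁆ = -(↑u⁻¹ * ⁅a, (u : A)⁆ * ↑u⁻¹) := by
  simp only [Ring.lie_def, mul_sub, sub_mul, mul_assoc, Units.inv_mul_cancel_left,
    Units.mul_inv, mul_one, neg_sub]

theorem lie_units_zpow (h : Commute ⁅a, (u : A)⁆ u) (k : ℤ) :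
    ⁅a, (↑(u ^ k) : A)⁆ = k • (↑(u ^ (k - 1)) * ⁅a, (u : A)⁆) := by
  have zpow_pred_mul (l : ℤ) : (↑(u ^ (l - 1)) : A) * u = ↑(u ^ l) := by
    rw [← Units.val_mul, ← zpow_add_one, sub_add_cancel]
  have zpow_pred (l : ℤ) : (↑(u ^ (l - 1)) : A) = ↑(u ^ l) * ↑u⁻¹ := by
    rw [← Units.val_mul, ← zpow_sub_one]
  induction k using Int.induction_on with
  | zero => simp [Ring.lie_def]
  | succ n ih =>
    generalize (n : ℤ) = k at ih ⊢
    calc ⁅a, (↑(u ^ (k + 1)) : A)⁆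
        = ⁅a, (↑(u ^ k) : A)⁆ * u + ↑(u ^ k) * ⁅a, (u : A)⁆ := by
          rw [zpow_add_one, Units.val_mul, lie_mul]
      _ = k • (↑(u ^ k) * ⁅a, (u : A)⁆) + ↑(u ^ k) * ⁅a, (u : A)⁆ := by
          rw [ih, smul_mul_assoc, mul_assoc, h.eq, ← mul_assoc, zpow_pred_mul]
      _ = (k + 1) • (↑(u ^ (k + 1 - 1)) * ⁅a, (u : A)⁆) := by
          rw [add_sub_cancel_right, add_smul, one_smul]
  | pred n ih =>
    generalize -(n : ℤ) = k at ih ⊢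
    calc ⁅a, (↑(u ^ (k - 1)) : A)⁆
        = ⁅a, (↑(u ^ k) : A)⁆ * ↑u⁻¹ - ↑(u ^ k) * (↑u⁻¹ * ⁅a, (u : A)⁆ * ↑u⁻¹) := by
          rw [zpow_pred, lie_mul, lie_units_inv, mul_neg, ← sub_eq_add_neg]
      _ = k • (↑(u ^ (k - 1 - 1)) * ⁅a, (u : A)⁆) - ↑(u ^ (k - 1 - 1)) * ⁅a, (u : A)⁆ := by
          rw [ih, zpow_pred (k - 1), zpow_pred, smul_mul_assoc]
          simp only [mul_assoc, h.units_inv_right.eq]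
      _ = (k - 1) • (↑(u ^ (k - 1 - 1)) * ⁅a, (u : A)⁆) := by
          rw [sub_smul, one_smul]

theorem lie_mul_mul_of_commute (h : Commute x y) (a : A) :
    ⁅x * a, y * a⁆ = (x * ⁅a, y⁆ - y * ⁅a, x⁆) * a := by
  have swap : x * y * a * a = y * x * a * a := by rw [h.eq]
  simp only [Ring.lie_def, mul_sub, sub_mul, ← mul_assoc, swap]
  abel

theorem lie_units_zpow_mul (h : Commute ⁅a, (u : A)⁆ u) (i j : ℤ) :
    ⁅↑(u ^ i) * a, ↑(u ^ j) * a⁆ = (j - i) • (↑(u ^ (i + j - 1)) * ⁅a, (u : A)⁆ * a) := by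
  have mul_lie_zpow (k l : ℤ) :
      ↑(u ^ k) * ⁅a, (↑(u ^ l) : A)⁆ = l • (↑(u ^ (k + l - 1)) * ⁅a, (u : A)⁆) := by
    rw [lie_units_zpow h, mul_smul_comm, ← mul_assoc, ← Units.val_mul, ← zpow_add, add_sub_assoc]
  rw [lie_mul_mul_of_commute (Commute.zpow_zpow_self u i j).units_val, mul_lie_zpow,
    mul_lie_zpow, add_comm j i, ← sub_smul, smul_mul_assoc]

end Commutator

theorem W22_oscillator_realization_general {A : Type*} [Ring A] (a bp : A) (u : Aˣ)
    (hboson : ⁅a, (u : A)⁆ = 1) (hbp2 : bp * bp = 0)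
    (habp : Commute a bp) (hubp : Commute (u : A) bp) (Lo Mo : ℤ → A)
    (hLo : ∀ n : ℤ, Lo n = ((u ^ (n + 1) : Aˣ) : A) * a)
    (hMo : ∀ n : ℤ, Mo n = ((u ^ (n + 1) : Aˣ) : A) * bp * a) (m n : ℤ) :
    ⁅Lo m, Lo n⁆ = (n - m) • Lo (m + n) ∧
      ⁅Lo m, Mo n⁆ = (n - m) • Mo (m + n) ∧
      ⁅Mo m, Mo n⁆ = 0 := by
  have Lo_commute (k : ℤ) : Commute (Lo k) bp := by
    rw [hLo]
    exact (hubp.units_zpow_left (k + 1)).mul_left habp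
  have Mo_eq (k : ℤ) : Mo k = Lo k * bp := by rw [hMo, hLo, mul_assoc, ← habp.eq, mul_assoc]
  have witt : ⁅Lo m, Lo n⁆ = (n - m) • Lo (m + n) := by
    have hcomm : Commute ⁅a, (u : A)⁆ u := hboson ▸ Commute.one_left _
    rw [hLo, hLo, hLo, lie_units_zpow_mul hcomm, hboson, mul_one, add_sub_add_right_eq_sub,
      show m + 1 + (n + 1) - 1 = m + n + 1 by ring]
  have Mo_mul_Mo (k l : ℤ) : Mo k * Mo l = 0 := by
    rw [Mo_eq, Mo_eq, (Lo_commute l).symm.mul_mul_mul_comm, hbp2, mul_zero]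
  refine ⟨witt, ?_, ?_⟩
  · rw [Mo_eq, Mo_eq, lie_mul_of_commute (Lo_commute m), witt, smul_mul_assoc]
  · rw [Ring.lie_def, Mo_mul_Mo, Mo_mul_Mo, sub_zero]

/-- Oscillator realization of the centerless W(2,2) algebra: in a unital
associative ℂ-algebra `A` with a bosonic oscillator `a, a⁺` (with `a⁺`
invertible) and a fermionic oscillator `b, b⁺` commuting with the bosonic one,
the elements `L_n = (a⁺)^{n+1}a` and `M_n = (a⁺)^{n+1}b⁺a` satisfy the
centerless W(2,2) relations under the commutator `[A,B] = AB − BA`. -/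
theorem W22_oscillator_realization {A : Type*} [Ring A] [Algebra ℂ A]
    (a b bp : A) (u : Aˣ)
    (hboson : a * (u : A) - (u : A) * a = 1)
    (hfermion : b * bp + bp * b = 1)
    (hb2 : b * b = 0) (hbp2 : bp * bp = 0)
    (hab : a * b = b * a) (habp : a * bp = bp * a)
    (hub : (u : A) * b = b * (u : A)) (hubp : (u : A) * bp = bp * (u : A))
    (Lo Mo : ℤ → A)
    (hLo : ∀ n : ℤ, Lo n = ((u ^ (n + 1) : Aˣ) : A) * a)
    (hMo : ∀ n : ℤ, Mo n = ((u ^ (n + 1) : Aˣ) : A) * bp * a) :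
    ∀ m n : ℤ,
      (Lo m * Lo n - Lo n * Lo m = (n - m) • Lo (m + n)) ∧
      (Lo m * Mo n - Mo n * Lo m = (n - m) • Mo (m + n)) ∧
      (Mo m * Mo n - Mo n * Mo m = 0) :=
  W22_oscillator_realization_general a bp u hboson hbp2 habp hubp Lo Mo hLo hMo
end
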